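/- Let ν ≥ 1 and let q_1, q_2 : [0,2π)^ν → ℝ be bounded measurable functions with η ≤ q_k(x) ≤ M for almost every x, for some constants 0 < η ≤ M. For n ∈ ℕ set Q_k^{(n)} := T_n(q_k) (Hermitian positive definite Toeplitz compressions), R_{k,n} := Q_k^{(n)} (Q_k^{(n)} + I)^{−1}, W_{n,t} := R_{1,n}^{t/2} R_{2,n}^{1−t} R_{1,n}^{t/2}, and define ψ_n(t) := −t Tr log(Q_1^{(n)} + I) − (1−t) Tr log(Q_2^{(n)} + I) − Tr log(I − W_{n,t}) for t ∈ [0,1]. Then the sequence of functions (1/n^ν) ψ_n converges uniformly on [0,1] to ψ(t) := −(2π)^{−ν} ∫_{[0,2π)^ν} log[ (1 + q_1(x))^t (1 + q_2(x))^{1−t} − q_1(x)^t q_2(x)^{1−t} ] dx. -/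

import Mathlib

open MeasureTheory Filter Matrix Set

noncomputable section

/-- The cube `[0, 2π)^ν`. -/
def cube (ν : ℕ) : Set (Fin ν → ℝ) := Set.univ.pi fun _ => Set.Ico 0 (2 * Real.pi)

/-- Fourier coefficient of `a : [0,2π)^ν → ℂ` at `j ∈ ℤ^ν`. -/
def fourierCoefficient {ν : ℕ} (a : (Fin ν → ℝ) → ℂ) (j : Fin ν → ℤ) : ℂ :=
  (((2 * Real.pi) ^ ν : ℝ) : ℂ)⁻¹ *
    ∫ x in cube ν, a x * Complex.exp (-Complex.I * ∑ m, (j m : ℂ) * (x m : ℂ))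

/-- The Toeplitz compression `T_n(a)` with entries `â(j−k)`, `j,k ∈ {0,…,n−1}^ν`. -/
def toeplitz {ν : ℕ} (n : ℕ) (a : (Fin ν → ℝ) → ℂ) :
    Matrix (Fin ν → Fin n) (Fin ν → Fin n) ℂ :=
  Matrix.of fun j k => fourierCoefficient a fun m => (j m : ℤ) - (k m : ℤ)

/-- Real power of a positive matrix via the continuous functional calculus. -/
def mpow {m : Type*} [Fintype m] [DecidableEq m] (A : Matrix m m ℂ) (t : ℝ) :
    Matrix m m ℂ := cfc (fun x : ℝ => x ^ t) A

/-- Logarithm of a positive definite matrix via the continuous functional calculus. -/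
def mlog {m : Type*} [Fintype m] [DecidableEq m] (A : Matrix m m ℂ) : Matrix m m ℂ :=
  cfc Real.log A

/-- `R = Q(Q + I)⁻¹`. -/
def Rmat {m : Type*} [Fintype m] [DecidableEq m] (Q : Matrix m m ℂ) : Matrix m m ℂ :=
  Q * (Q + 1)⁻¹

/-- `W_t = R₁^{t/2} R₂^{1−t} R₁^{t/2}`. -/
def Wmat {m : Type*} [Fintype m] [DecidableEq m] (Q₁ Q₂ : Matrix m m ℂ) (t : ℝ) :
    Matrix m m ℂ :=
  mpow (Rmat Q₁) (t / 2) * mpow (Rmat Q₂) (1 - t) * mpow (Rmat Q₁) (t / 2)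

/-- `ψ_n(t) = −t Tr log(Q₁⁽ⁿ⁾+I) − (1−t) Tr log(Q₂⁽ⁿ⁾+I) − Tr log(I − W_{n,t})`,
where `Q_k⁽ⁿ⁾ = T_n(q_k)`. -/
def psiN {ν : ℕ} (q₁ q₂ : (Fin ν → ℝ) → ℝ) (n : ℕ) (t : ℝ) : ℝ :=
  -t * ((mlog (toeplitz n (fun x => (q₁ x : ℂ)) + 1)).trace).re -
    (1 - t) * ((mlog (toeplitz n (fun x => (q₂ x : ℂ)) + 1)).trace).re -
    ((mlog (1 - Wmat (toeplitz n (fun x => (q₁ x : ℂ)))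
        (toeplitz n (fun x => (q₂ x : ℂ))) t)).trace).re

/-- The limit function
`ψ(t) = −(2π)^{−ν} ∫ log[(1+q₁(x))^t (1+q₂(x))^{1−t} − q₁(x)^t q₂(x)^{1−t}] dx`. -/
def psiLimit {ν : ℕ} (q₁ q₂ : (Fin ν → ℝ) → ℝ) (t : ℝ) : ℝ :=
  -(((2 * Real.pi) ^ ν : ℝ)⁻¹ *
    ∫ x in cube ν,
      Real.log ((1 + q₁ x) ^ t * (1 + q₂ x) ^ (1 - t) - (q₁ x) ^ t * (q₂ x) ^ (1 - t)))

/-!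
By Parseval, `T_n(ab) - T_n(a) T_n(b)` has Hilbert–Schmidt norm `o(n^{ν/2})` for bounded symbols
`a, b`: each of its columns only sees the frequencies of `b` that a translation moves out of the
box, and for a fixed frequency this happens in a vanishing proportion of the columns. Matrices that
are bounded and `o(n^{ν/2})`-close to Toeplitz compressions therefore multiply like their symbols;
polynomial approximation extends this to continuous functions of self-adjoint matrices, hence to
powers and logarithms, and the trace divided by `n^ν` tends to the mean of the symbol. The parameter
`t` may vary with `n` in this argument, and joint convergence as `n → ∞` and `t → t₀`, for every
`t₀` in the compact interval `[0, 1]`, is uniform convergence.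
-/

section CubeMeasure

variable (ν : ℕ)

/-- The normalised Lebesgue measure on `cube ν`, under which Fourier coefficients are integrals
against characters and the symbols of Toeplitz matrices are elements of `L^∞`. -/
def cubeMeasure : Measure (Fin ν → ℝ) := ProbabilityTheory.cond volume (cube ν)

lemma volume_cube : volume (cube ν) = ENNReal.ofReal ((2 * Real.pi) ^ ν) := by
  rw [cube, Real.volume_pi_Ico, ENNReal.ofReal_pow Real.two_pi_pos.le]
  simp

lemma cubeMeasure_eq_smul :
    cubeMeasure ν = ENNReal.ofReal ((2 * Real.pi) ^ ν)⁻¹ • volume.restrict (cube ν) := by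
  rw [cubeMeasure, ProbabilityTheory.cond, volume_cube,
    ENNReal.ofReal_inv_of_pos (pow_pos Real.two_pi_pos ν)]

instance : IsProbabilityMeasure (cubeMeasure ν) :=
  ProbabilityTheory.cond_isProbabilityMeasure_of_finite
    (by simpa [volume_cube] using pow_pos Real.two_pi_pos ν) (by simp [volume_cube])

lemma ae_cubeMeasure : ae (cubeMeasure ν) = ae (volume.restrict (cube ν)) := by
  rw [cubeMeasure_eq_smul]
  exact Measure.ae_ennreal_smul_measure_eq
    (by simpa using inv_pos.2 (pow_pos Real.two_pi_pos ν)) _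

variable {ν}

lemma integral_cubeMeasure {E : Type*} [NormedAddCommGroup E] [NormedSpace ℝ E]
    (f : (Fin ν → ℝ) → E) :
    ∫ x, f x ∂cubeMeasure ν = ((2 * Real.pi) ^ ν)⁻¹ • ∫ x in cube ν, f x := by
  rw [cubeMeasure_eq_smul, integral_smul_measure, ENNReal.toReal_ofReal]
  exact inv_nonneg.2 (pow_nonneg Real.two_pi_pos.le ν)

end CubeMeasure

section Characters

variable {ν : ℕ}

/-- The character `x ↦ e^{i j·x}` of the torus, viewed as a `2π`-periodic function on `ℝ^ν`. -/
def torusChar (j : Fin ν → ℤ) (x : Fin ν → ℝ) : ℂ :=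
  Complex.exp (Complex.I * ∑ m, (j m : ℂ) * (x m : ℂ))

lemma norm_torusChar (j : Fin ν → ℤ) (x : Fin ν → ℝ) : ‖torusChar j x‖ = 1 := by
  rw [torusChar, mul_comm]
  exact_mod_cast Complex.norm_exp_ofReal_mul_I (∑ m, (j m : ℝ) * x m)

@[simp]
lemma torusChar_zero (x : Fin ν → ℝ) : torusChar 0 x = 1 := by
  simp [torusChar]

lemma torusChar_add (j k : Fin ν → ℤ) (x : Fin ν → ℝ) :
    torusChar (j + k) x = torusChar j x * torusChar k x := by
  simp [torusChar, ← Complex.exp_add, ← mul_add, ← Finset.sum_add_distrib, add_mul]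

lemma star_torusChar (j : Fin ν → ℤ) (x : Fin ν → ℝ) :
    star (torusChar j x) = torusChar (-j) x := by
  simp [torusChar, ← Complex.exp_conj, map_sum]

lemma memLp_top_torusChar (j : Fin ν → ℤ) : MemLp (torusChar j) ⊤ (cubeMeasure ν) := by
  refine memLp_top_of_bound (Measurable.aestronglyMeasurable ?_) 1
    (Eventually.of_forall fun x => (norm_torusChar j x).le)
  unfold torusChar
  fun_prop

lemma memLp_mul_torusChar {p : ENNReal} {f : (Fin ν → ℝ) → ℂ} (hf : MemLp f p (cubeMeasure ν))
    (j : Fin ν → ℤ) : MemLp (fun x => f x * torusChar j x) p (cubeMeasure ν) :=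
  (memLp_top_torusChar j).mul' hf

end Characters

section FourierCoefficient

variable {ν : ℕ} {f g : (Fin ν → ℝ) → ℂ}

lemma fourierCoefficient_eq_integral (f : (Fin ν → ℝ) → ℂ) (j : Fin ν → ℤ) :
    fourierCoefficient f j = ∫ x, f x * torusChar (-j) x ∂cubeMeasure ν := by
  rw [integral_cubeMeasure, Complex.real_smul, Complex.ofReal_inv]
  simp [fourierCoefficient, torusChar]

lemma fourierCoefficient_congr_ae (h : f =ᵐ[cubeMeasure ν] g) (j : Fin ν → ℤ) :
    fourierCoefficient f j = fourierCoefficient g j := by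
  simp only [fourierCoefficient_eq_integral]
  exact integral_congr_ae (h.mul (EventuallyEq.refl _ _))

lemma integrable_mul_torusChar (hf : Integrable f (cubeMeasure ν)) (j : Fin ν → ℤ) :
    Integrable (fun x => f x * torusChar j x) (cubeMeasure ν) :=
  memLp_one_iff_integrable.1 (memLp_mul_torusChar (memLp_one_iff_integrable.2 hf) j)

lemma fourierCoefficient_add (hf : Integrable f (cubeMeasure ν))
    (hg : Integrable g (cubeMeasure ν)) (j : Fin ν → ℤ) :
    fourierCoefficient (fun x => f x + g x) j
      = fourierCoefficient f j + fourierCoefficient g j := by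
  simp only [fourierCoefficient_eq_integral, add_mul]
  exact integral_add (integrable_mul_torusChar hf _) (integrable_mul_torusChar hg _)

lemma fourierCoefficient_sub (hf : Integrable f (cubeMeasure ν))
    (hg : Integrable g (cubeMeasure ν)) (j : Fin ν → ℤ) :
    fourierCoefficient (fun x => f x - g x) j
      = fourierCoefficient f j - fourierCoefficient g j := by
  simp only [fourierCoefficient_eq_integral, sub_mul]
  exact integral_sub (integrable_mul_torusChar hf _) (integrable_mul_torusChar hg _)

lemma fourierCoefficient_const_mul (c : ℂ) (f : (Fin ν → ℝ) → ℂ) (j : Fin ν → ℤ) :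
    fourierCoefficient (fun x => c * f x) j = c * fourierCoefficient f j := by
  simp only [fourierCoefficient_eq_integral, mul_assoc, integral_const_mul]

lemma fourierCoefficient_sum {ι : Type*} (s : Finset ι) {f : ι → (Fin ν → ℝ) → ℂ}
    (hf : ∀ i ∈ s, Integrable (f i) (cubeMeasure ν)) (j : Fin ν → ℤ) :
    fourierCoefficient (fun x => ∑ i ∈ s, f i x) j = ∑ i ∈ s, fourierCoefficient (f i) j := by
  simp only [fourierCoefficient_eq_integral, Finset.sum_mul]
  exact integral_finsetSum s fun i hi => integrable_mul_torusChar (hf i hi) _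

lemma fourierCoefficient_mul_torusChar (f : (Fin ν → ℝ) → ℂ) (j k : Fin ν → ℤ) :
    fourierCoefficient (fun x => f x * torusChar k x) j = fourierCoefficient f (j - k) := by
  simp only [fourierCoefficient_eq_integral, mul_assoc, ← torusChar_add]
  rw [neg_sub, sub_eq_add_neg]

lemma star_fourierCoefficient (f : (Fin ν → ℝ) → ℂ) (j : Fin ν → ℤ) :
    star (fourierCoefficient f j) = fourierCoefficient (fun x => star (f x)) (-j) := by
  simp only [fourierCoefficient_eq_integral, ← star_torusChar, ← star_mul']
  exact integral_conj.symm

lemma fourierCoefficient_zero_index (f : (Fin ν → ℝ) → ℂ) :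
    fourierCoefficient f 0 = ∫ x, f x ∂cubeMeasure ν := by
  simp [fourierCoefficient_eq_integral]

end FourierCoefficient

section Parseval

variable {ν : ℕ}

-- `UnitAddTorus.hasSum_sq_mFourierCoeff` refers to the product of these Haar measures.
local instance : MeasureSpace UnitAddCircle := ⟨AddCircle.haarAddCircle⟩
local instance : Measure.IsAddHaarMeasure (volume : Measure UnitAddCircle) :=
  inferInstanceAs (Measure.IsAddHaarMeasure AddCircle.haarAddCircle)
local instance : IsProbabilityMeasure (volume : Measure UnitAddCircle) :=
  inferInstanceAs (IsProbabilityMeasure AddCircle.haarAddCircle)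

/-- The coordinates in `(0, 2π]` of a point of the torus `(ℝ/ℤ)^ν`; the endpoints are those of
`AddCircle.equivIoc`, and the difference with `cube ν` is a null set. -/
def torusAngle (y : UnitAddTorus (Fin ν)) (m : Fin ν) : ℝ :=
  2 * Real.pi * AddCircle.equivIoc 1 0 (y m)

lemma torusChar_torusAngle (j : Fin ν → ℤ) (y : UnitAddTorus (Fin ν)) :
    torusChar j (torusAngle y) = UnitAddTorus.mFourier j y := by
  simp only [UnitAddTorus.mFourier, ContinuousMap.coe_mk]
  conv_rhs =>
    enter [2, m]
    rw [← AddCircle.coe_equivIoc (p := (1 : ℝ)) (a := 0) (y := y m), fourier_coe_apply]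
  rw [← Complex.exp_sum, torusChar, Finset.mul_sum]
  congr 1
  refine Finset.sum_congr rfl fun m _ => ?_
  rw [torusAngle]
  push_cast
  ring

lemma map_two_pi_smul_volume_restrict :
    (volume.restrict {x : Fin ν → ℝ | ∀ m, x m ∈ Ioc (0 : ℝ) (0 + 1)}).map
      (fun x => (2 * Real.pi) • x) = cubeMeasure ν := by
  have preimage_eq : {x : Fin ν → ℝ | ∀ m, x m ∈ Ioc (0 : ℝ) (0 + 1)}
      = (fun x => (2 * Real.pi) • x) ⁻¹' Set.univ.pi fun _ => Ioc 0 (2 * Real.pi) := by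
    ext x
    simp [Real.pi_pos, mul_le_iff_le_one_right Real.two_pi_pos]
  have ae_eq_cube : (Set.univ.pi fun _ : Fin ν => Ioc 0 (2 * Real.pi)) =ᵐ[volume] cube ν :=
    Measure.univ_pi_Ioc_ae_eq_Icc.trans Measure.univ_pi_Ico_ae_eq_Icc.symm
  rw [preimage_eq, ← Measure.restrict_map (by fun_prop)
      (MeasurableSet.univ_pi fun _ => measurableSet_Ioc),
    Measure.map_addHaar_smul _ Real.two_pi_pos.ne', Measure.restrict_smul,
    Measure.restrict_congr_set ae_eq_cube, Module.finrank_fin_fun,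
    abs_of_nonneg (inv_nonneg.2 (pow_nonneg Real.two_pi_pos.le ν)), cubeMeasure_eq_smul]

lemma measurePreserving_torusAngle :
    MeasurePreserving (torusAngle : UnitAddTorus (Fin ν) → Fin ν → ℝ) volume (cubeMeasure ν) :=
  (⟨by fun_prop, map_two_pi_smul_volume_restrict⟩ :
      MeasurePreserving (fun x : Fin ν → ℝ => (2 * Real.pi) • x) _ (cubeMeasure ν)).comp
    ((measurePreserving_subtype_coe (MeasurableSet.univ_pi' fun _ => measurableSet_Ioc)).comp
      (UnitAddTorus.measurePreserving_equivPiIoc 0))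

lemma integral_comp_torusAngle {E : Type*} [NormedAddCommGroup E] [NormedSpace ℝ E]
    {f : (Fin ν → ℝ) → E} (hf : AEStronglyMeasurable f (cubeMeasure ν)) :
    ∫ y, f (torusAngle y) = ∫ x, f x ∂cubeMeasure ν := by
  have mp := measurePreserving_torusAngle (ν := ν)
  rw [← mp.map_eq] at hf ⊢
  exact (integral_map mp.aemeasurable hf).symm

theorem hasSum_norm_sq_fourierCoefficient {f : (Fin ν → ℝ) → ℂ} (hf : MemLp f 2 (cubeMeasure ν)) :
    HasSum (fun j => ‖fourierCoefficient f j‖ ^ 2) (∫ x, ‖f x‖ ^ 2 ∂cubeMeasure ν) := by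
  have hF := hf.comp_measurePreserving measurePreserving_torusAngle
  have coeff_eq (j : Fin ν → ℤ) :
      UnitAddTorus.mFourierCoeff (hF.toLp _) j = fourierCoefficient f j := by
    rw [fourierCoefficient_eq_integral,
      ← integral_comp_torusAngle (memLp_mul_torusChar hf (-j)).aestronglyMeasurable]
    refine integral_congr_ae ?_
    filter_upwards [hF.coeFn_toLp] with y hy
    rw [hy, torusChar_torusAngle, smul_eq_mul, mul_comm, Function.comp_apply]
  have norm_eq : ∫ y, ‖hF.toLp _ y‖ ^ 2 = ∫ x, ‖f x‖ ^ 2 ∂cubeMeasure ν := by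
    rw [← integral_comp_torusAngle (f := fun x => ‖f x‖ ^ 2) (hf.aestronglyMeasurable.norm.pow 2)]
    refine integral_congr_ae ?_
    filter_upwards [hF.coeFn_toLp] with y hy
    rw [hy, Function.comp_apply]
  simpa only [coeff_eq, norm_eq] using UnitAddTorus.hasSum_sq_mFourierCoeff (hF.toLp _)

end Parseval

section NormalizedHilbertSchmidt

variable {𝕜 m : Type*} [RCLike 𝕜] [Fintype m]

section Frobenius

open scoped Matrix.Norms.Frobenius

/-- The Hilbert–Schmidt norm of a square matrix divided by the square root of its size, so that the
identity has norm one; it is `0` for the empty matrix. -/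
def normalizedHSNorm (X : Matrix m m 𝕜) : ℝ := ‖X‖ / √(Fintype.card m)

lemma normalizedHSNorm_nonneg (X : Matrix m m 𝕜) : 0 ≤ normalizedHSNorm X := by
  unfold normalizedHSNorm
  positivity

@[simp]
lemma normalizedHSNorm_zero : normalizedHSNorm (0 : Matrix m m 𝕜) = 0 := by
  simp [normalizedHSNorm]

lemma normalizedHSNorm_add_le (X Y : Matrix m m 𝕜) :
    normalizedHSNorm (X + Y) ≤ normalizedHSNorm X + normalizedHSNorm Y := by
  rw [normalizedHSNorm, normalizedHSNorm, normalizedHSNorm, ← add_div]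
  gcongr
  exact norm_add_le X Y

lemma normalizedHSNorm_sub_le (X Y Z : Matrix m m 𝕜) :
    normalizedHSNorm (X - Z) ≤ normalizedHSNorm (X - Y) + normalizedHSNorm (Y - Z) := by
  simpa using normalizedHSNorm_add_le (X - Y) (Y - Z)

lemma normalizedHSNorm_sub_comm (X Y : Matrix m m 𝕜) :
    normalizedHSNorm (X - Y) = normalizedHSNorm (Y - X) := by
  rw [normalizedHSNorm, norm_sub_rev, normalizedHSNorm]

lemma normalizedHSNorm_conjTranspose (X : Matrix m m 𝕜) :
    normalizedHSNorm Xᴴ = normalizedHSNorm X := by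
  rw [normalizedHSNorm, frobenius_norm_conjTranspose, normalizedHSNorm]

lemma normalizedHSNorm_sq (X : Matrix m m 𝕜) :
    normalizedHSNorm X ^ 2 = (∑ k, ∑ j, ‖X j k‖ ^ 2) / Fintype.card m := by
  rw [normalizedHSNorm, div_pow, Real.sq_sqrt (Nat.cast_nonneg _), frobenius_norm_def,
    ← Real.sqrt_eq_rpow, Real.sq_sqrt (by positivity), Finset.sum_comm]
  simp only [Real.rpow_two]

end Frobenius

open scoped Matrix.Norms.L2Operator

lemma norm_trace_le_card_mul_normalizedHSNorm (X : Matrix m m 𝕜) :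
    ‖X.trace‖ ≤ Fintype.card m * normalizedHSNorm X := by
  cases isEmpty_or_nonempty m
  · simp [trace]
  refine abs_le_of_sq_le_sq' ?_ (by have := normalizedHSNorm_nonneg X; positivity) |>.2
  calc ‖X.trace‖ ^ 2 ≤ (∑ j, ‖X j j‖) ^ 2 := by gcongr; exact norm_sum_le _ _
    _ ≤ Fintype.card m * ∑ j, ‖X j j‖ ^ 2 := sq_sum_le_card_mul_sum_sq
    _ ≤ Fintype.card m * ∑ k, ∑ j, ‖X j k‖ ^ 2 := by
      gcongr with k
      exact Finset.single_le_sum (f := fun j => ‖X j k‖ ^ 2) (fun _ _ => by positivity)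
        (Finset.mem_univ k)
    _ = (Fintype.card m * normalizedHSNorm X) ^ 2 := by
      rw [mul_pow, normalizedHSNorm_sq]
      field_simp

variable [DecidableEq m]

lemma normalizedHSNorm_mul_le (X Y : Matrix m m 𝕜) :
    normalizedHSNorm (X * Y) ≤ ‖X‖ * normalizedHSNorm Y := by
  refine abs_le_of_sq_le_sq' ?_ (mul_nonneg (norm_nonneg X) (normalizedHSNorm_nonneg Y)) |>.2
  have column_le (k : m) : ∑ j, ‖(X * Y) j k‖ ^ 2 ≤ ‖X‖ ^ 2 * ∑ j, ‖Y j k‖ ^ 2 := by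
    have h := pow_le_pow_left₀ (norm_nonneg _) (l2_opNorm_mulVec X (WithLp.toLp 2 (Y.col k))) 2
    rwa [mul_pow, EuclideanSpace.norm_sq_eq, EuclideanSpace.norm_sq_eq] at h
  rw [mul_pow, normalizedHSNorm_sq, normalizedHSNorm_sq, mul_div_assoc', Finset.mul_sum]
  gcongr with k
  exact column_le k

lemma normalizedHSNorm_mul_le' (X Y : Matrix m m 𝕜) :
    normalizedHSNorm (X * Y) ≤ normalizedHSNorm X * ‖Y‖ := by
  rw [← normalizedHSNorm_conjTranspose, conjTranspose_mul, mul_comm,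
    ← l2_opNorm_conjTranspose Y, ← normalizedHSNorm_conjTranspose X]
  exact normalizedHSNorm_mul_le Yᴴ Xᴴ

lemma normalizedHSNorm_one_le : normalizedHSNorm (1 : Matrix m m 𝕜) ≤ 1 := by
  refine abs_le_of_sq_le_sq' ?_ zero_le_one |>.2
  simp [normalizedHSNorm_sq, one_apply, apply_ite, ite_pow, div_self_le_one]

lemma normalizedHSNorm_le_norm (X : Matrix m m 𝕜) : normalizedHSNorm X ≤ ‖X‖ := by
  simpa using (normalizedHSNorm_mul_le X 1).trans
    (mul_le_of_le_one_right (norm_nonneg X) normalizedHSNorm_one_le)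

end NormalizedHilbertSchmidt

section BoundedSymbols

variable {ν : ℕ}

lemma memLp_top_ofReal {q : (Fin ν → ℝ) → ℝ} {c d : ℝ} (hq : AEMeasurable q (cubeMeasure ν))
    (hcd : ∀ᵐ x ∂cubeMeasure ν, q x ∈ Icc c d) :
    MemLp (fun x => (q x : ℂ)) ⊤ (cubeMeasure ν) :=
  (memLp_of_bounded hcd hq.aestronglyMeasurable ⊤).ofReal

lemma exists_ae_norm_le_of_memLp_top {α E : Type*} [MeasurableSpace α] {μ : Measure α}
    [NormedAddCommGroup E] {f : α → E} (hf : MemLp f ⊤ μ) : ∃ C : ℝ, ∀ᵐ x ∂μ, ‖f x‖ ≤ C := by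
  have ess_sup_lt := hf.eLpNorm_lt_top
  rw [eLpNorm_exponent_top, eLpNormEssSup_lt_top_iff_isBoundedUnder] at ess_sup_lt
  obtain ⟨C, hC⟩ := ess_sup_lt
  exact ⟨C, eventually_map.1 hC⟩

end BoundedSymbols

section TrigPoly

variable {ν n : ℕ} {a : (Fin ν → ℝ) → ℂ}

/-- The embedding of the box `{0, …, n-1}^ν`, which indexes Toeplitz matrices, into `ℤ^ν`. -/
def boxToInt (ν n : ℕ) : (Fin ν → Fin n) ↪ (Fin ν → ℤ) where
  toFun j m := (j m : ℤ)
  inj' j k h := by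
    ext m
    simpa using congrFun h m

@[simp]
lemma boxToInt_apply (j : Fin ν → Fin n) (m : Fin ν) : boxToInt ν n j m = (j m : ℤ) := rfl

lemma mem_range_boxToInt {j : Fin ν → ℤ} :
    j ∈ range (boxToInt ν n) ↔ ∀ m, 0 ≤ j m ∧ j m < n := by
  refine ⟨?_, fun h => ⟨fun m => ⟨(j m).toNat, by have := h m; omega⟩, ?_⟩⟩
  · rintro ⟨k, rfl⟩ m
    simp
  · ext m
    simp [h m]

lemma toeplitz_apply (a : (Fin ν → ℝ) → ℂ) (j k : Fin ν → Fin n) :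
    toeplitz n a j k = fourierCoefficient a (boxToInt ν n j - boxToInt ν n k) := rfl

/-- The trigonometric polynomial whose coefficients on the box `{0, …, n-1}^ν` are `v`. -/
def trigPoly (v : (Fin ν → Fin n) → ℂ) (x : Fin ν → ℝ) : ℂ :=
  ∑ k, v k * torusChar (boxToInt ν n k) x

lemma memLp_top_trigPoly (v : (Fin ν → Fin n) → ℂ) : MemLp (trigPoly v) ⊤ (cubeMeasure ν) :=
  memLp_finsetSum _ fun k _ => (memLp_top_torusChar _).const_mul (v k)

lemma fourierCoefficient_const (c : ℂ) (j : Fin ν → ℤ) :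
    fourierCoefficient (fun _ => c) j = if j = 0 then c else 0 := by
  split_ifs with hj
  · simp [hj, fourierCoefficient_zero_index]
  · have zero_index : fourierCoefficient (fun _ : Fin ν → ℝ => c) 0 = c := by
      simp [fourierCoefficient_zero_index]
    -- Parseval leaves no mass outside the zeroth coefficient.
    have h := sum_le_hasSum {0, j} (fun _ _ => by positivity)
      (hasSum_norm_sq_fourierCoefficient (memLp_const c))
    rw [Finset.sum_pair (Ne.symm hj), zero_index] at h
    simpa using h

lemma fourierCoefficient_mul_trigPoly (ha : Integrable a (cubeMeasure ν))
    (v : (Fin ν → Fin n) → ℂ) (j : Fin ν → ℤ) :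
    fourierCoefficient (fun x => a x * trigPoly v x) j
      = ∑ k, fourierCoefficient a (j - boxToInt ν n k) * v k := by
  have expand (x : Fin ν → ℝ) :
      a x * trigPoly v x = ∑ k, v k * (a x * torusChar (boxToInt ν n k) x) := by
    rw [trigPoly, Finset.mul_sum]
    exact Finset.sum_congr rfl fun k _ => mul_left_comm _ _ _
  simp only [expand]
  rw [fourierCoefficient_sum _ fun k _ => (integrable_mul_torusChar ha _).const_mul _]
  simp only [fourierCoefficient_const_mul, fourierCoefficient_mul_torusChar]
  exact Finset.sum_congr rfl fun k _ => mul_comm _ _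

lemma fourierCoefficient_trigPoly (v : (Fin ν → Fin n) → ℂ) (j : Fin ν → ℤ) :
    fourierCoefficient (trigPoly v) j = ∑ k, if j = boxToInt ν n k then v k else 0 := by
  simpa [fourierCoefficient_const, sub_eq_zero] using
    fourierCoefficient_mul_trigPoly (a := fun _ => 1) (integrable_const 1) v j

lemma fourierCoefficient_trigPoly_boxToInt (v : (Fin ν → Fin n) → ℂ) (j : Fin ν → Fin n) :
    fourierCoefficient (trigPoly v) (boxToInt ν n j) = v j := by
  simp [fourierCoefficient_trigPoly]

lemma fourierCoefficient_trigPoly_of_notMem (v : (Fin ν → Fin n) → ℂ) {j : Fin ν → ℤ}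
    (hj : j ∉ range (boxToInt ν n)) : fourierCoefficient (trigPoly v) j = 0 := by
  rw [fourierCoefficient_trigPoly]
  exact Finset.sum_eq_zero fun k _ => if_neg fun h => hj ⟨k, h.symm⟩

lemma sum_norm_sq_fourierCoefficient_le {f : (Fin ν → ℝ) → ℂ} (hf : MemLp f 2 (cubeMeasure ν)) :
    ∑ j, ‖fourierCoefficient f (boxToInt ν n j)‖ ^ 2 ≤ ∫ x, ‖f x‖ ^ 2 ∂cubeMeasure ν := by
  simpa using sum_le_hasSum (Finset.univ.map (boxToInt ν n)) (fun _ _ => by positivity)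
    (hasSum_norm_sq_fourierCoefficient hf)

lemma integral_norm_sq_trigPoly (v : (Fin ν → Fin n) → ℂ) :
    ∫ x, ‖trigPoly v x‖ ^ 2 ∂cubeMeasure ν = ∑ j, ‖v j‖ ^ 2 := by
  have parseval := hasSum_norm_sq_fourierCoefficient
    ((memLp_top_trigPoly v).mono_exponent le_top)
  rw [← (boxToInt ν n).injective.hasSum_iff fun j hj => by
    simp [fourierCoefficient_trigPoly_of_notMem v hj]] at parseval
  simpa [fourierCoefficient_trigPoly_boxToInt] using parseval.unique (hasSum_fintype _)

lemma integral_norm_sq_mul_le {f : (Fin ν → ℝ) → ℂ} {C : ℝ}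
    (hC : ∀ᵐ x ∂cubeMeasure ν, ‖a x‖ ≤ C) (hf : MemLp f 2 (cubeMeasure ν)) :
    ∫ x, ‖a x * f x‖ ^ 2 ∂cubeMeasure ν ≤ C ^ 2 * ∫ x, ‖f x‖ ^ 2 ∂cubeMeasure ν := by
  rw [← integral_const_mul]
  refine integral_mono_of_nonneg (Eventually.of_forall fun _ => by positivity)
    (hf.integrable_norm_pow two_ne_zero |>.const_mul _) ?_
  filter_upwards [hC] with x hx
  rw [norm_mul, mul_pow]
  gcongr

end TrigPoly

section Toeplitz

open scoped Matrix.Norms.L2Operator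

variable {ν n : ℕ} {a b : (Fin ν → ℝ) → ℂ}

lemma toeplitz_mulVec (ha : Integrable a (cubeMeasure ν)) (v : (Fin ν → Fin n) → ℂ)
    (j : Fin ν → Fin n) :
    (toeplitz n a *ᵥ v) j = fourierCoefficient (fun x => a x * trigPoly v x) (boxToInt ν n j) :=
  (fourierCoefficient_mul_trigPoly ha v _).symm

theorem norm_toeplitz_le {C : ℝ} (ha : AEStronglyMeasurable a (cubeMeasure ν))
    (hC : ∀ᵐ x ∂cubeMeasure ν, ‖a x‖ ≤ C) : ‖toeplitz n a‖ ≤ C := by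
  have a_memLp : MemLp a ⊤ (cubeMeasure ν) := memLp_top_of_bound ha C hC
  have C_nonneg : 0 ≤ C := let ⟨x, hx⟩ := hC.exists; (norm_nonneg (a x)).trans hx
  rw [cstar_norm_def]
  refine ContinuousLinearMap.opNorm_le_bound _ C_nonneg fun v => ?_
  have p_memLp : MemLp (trigPoly v.ofLp) 2 (cubeMeasure ν) :=
    (memLp_top_trigPoly _).mono_exponent le_top
  refine abs_le_of_sq_le_sq' ?_ (by positivity) |>.2
  calc ‖toEuclideanCLM (n := Fin ν → Fin n) (𝕜 := ℂ) (toeplitz n a) v‖ ^ 2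
      = ∑ j, ‖fourierCoefficient (fun x => a x * trigPoly v.ofLp x) (boxToInt ν n j)‖ ^ 2 := by
        simp only [EuclideanSpace.norm_sq_eq, ofLp_toEuclideanCLM,
          toeplitz_mulVec (a_memLp.integrable le_top)]
    _ ≤ ∫ x, ‖a x * trigPoly v.ofLp x‖ ^ 2 ∂cubeMeasure ν :=
        sum_norm_sq_fourierCoefficient_le (p_memLp.mul' a_memLp)
    _ ≤ C ^ 2 * ∫ x, ‖trigPoly v.ofLp x‖ ^ 2 ∂cubeMeasure ν :=
        integral_norm_sq_mul_le hC p_memLp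
    _ = (C * ‖v‖) ^ 2 := by
        rw [integral_norm_sq_trigPoly, mul_pow, EuclideanSpace.norm_sq_eq]

lemma toeplitz_congr_ae (h : a =ᵐ[cubeMeasure ν] b) : toeplitz n a = toeplitz n b := by
  ext j k
  exact fourierCoefficient_congr_ae h _

lemma toeplitz_add (ha : Integrable a (cubeMeasure ν)) (hb : Integrable b (cubeMeasure ν)) :
    toeplitz n (fun x => a x + b x) = toeplitz n a + toeplitz n b := by
  ext j k
  exact fourierCoefficient_add ha hb _

lemma toeplitz_sub (ha : Integrable a (cubeMeasure ν)) (hb : Integrable b (cubeMeasure ν)) :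
    toeplitz n (fun x => a x - b x) = toeplitz n a - toeplitz n b := by
  ext j k
  exact fourierCoefficient_sub ha hb _

lemma toeplitz_const (c : ℂ) : toeplitz n (fun _ : Fin ν → ℝ => c) = algebraMap ℂ _ c := by
  ext j k
  rw [toeplitz_apply, fourierCoefficient_const, algebraMap_matrix_apply]
  simp [sub_eq_zero]

lemma conjTranspose_toeplitz (a : (Fin ν → ℝ) → ℂ) :
    (toeplitz n a)ᴴ = toeplitz n fun x => star (a x) := by
  ext j k
  rw [conjTranspose_apply, toeplitz_apply, star_fourierCoefficient, neg_sub, toeplitz_apply]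

lemma trace_toeplitz (a : (Fin ν → ℝ) → ℂ) :
    (toeplitz n a).trace = n ^ ν * ∫ x, a x ∂cubeMeasure ν := by
  simp [trace, toeplitz_apply, fourierCoefficient_zero_index]

lemma isSelfAdjoint_toeplitz_ofReal (q : (Fin ν → ℝ) → ℝ) :
    IsSelfAdjoint (toeplitz n fun x => (q x : ℂ)) := by
  rw [IsSelfAdjoint, star_eq_conjTranspose, conjTranspose_toeplitz]
  simp

lemma spectrum_subset_Icc_of_norm_sub_le {A : Type*} [NormedRing A] [StarRing A] [CStarRing A]
    [NormedAlgebra ℝ A] [CompleteSpace A] {x : A} {c r : ℝ} (h : ‖x - algebraMap ℝ A c‖ ≤ r) :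
    spectrum ℝ x ⊆ Icc (c - r) (c + r) := by
  intro t ht
  cases subsingleton_or_nontrivial A
  · simp [spectrum.of_subsingleton] at ht
  have shifted : t - c ∈ spectrum ℝ (x - algebraMap ℝ A c) := by
    rw [← spectrum.sub_singleton_eq]
    exact Set.sub_mem_sub ht rfl
  have := abs_le.1 ((spectrum.norm_le_norm_of_mem shifted).trans h)
  constructor <;> linarith

theorem spectrum_toeplitz_subset_Icc {q : (Fin ν → ℝ) → ℝ} {c d : ℝ}
    (hq : AEMeasurable q (cubeMeasure ν)) (hcd : ∀ᵐ x ∂cubeMeasure ν, q x ∈ Icc c d) :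
    spectrum ℝ (toeplitz n fun x => (q x : ℂ)) ⊆ Icc c d := by
  have q_memLp : MemLp (fun x => (q x : ℂ)) ⊤ (cubeMeasure ν) := memLp_top_ofReal hq hcd
  have norm_sub_le : ‖toeplitz n (fun x => (q x : ℂ)) - algebraMap ℝ _ ((c + d) / 2)‖
      ≤ (d - c) / 2 := by
    rw [IsScalarTower.algebraMap_apply ℝ ℂ, ← toeplitz_const,
      ← toeplitz_sub (q_memLp.integrable le_top) (integrable_const _)]
    refine norm_toeplitz_le (q_memLp.aestronglyMeasurable.sub aestronglyMeasurable_const) ?_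
    filter_upwards [hcd] with x hx
    rw [Complex.coe_algebraMap, ← Complex.ofReal_sub, Complex.norm_real, Real.norm_eq_abs, abs_le]
    constructor <;> linarith [hx.1, hx.2]
  convert spectrum_subset_Icc_of_norm_sub_le norm_sub_le using 2 <;> ring

end Toeplitz

section BoxDefect

open Topology

/-- The number of points of `{0, …, n-1}` that remain in this interval after translation by `m`. -/
def overlapCard (n : ℕ) (m : ℤ) : ℕ :=
  Finset.card {x : Fin n | 0 ≤ m + x ∧ m + x < n}

lemma overlapCard_le (n : ℕ) (m : ℤ) : overlapCard n m ≤ n :=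
  (Finset.card_le_univ _).trans_eq (Fintype.card_fin n)

lemma sub_abs_le_overlapCard (n : ℕ) (m : ℤ) : (n : ℤ) - |m| ≤ overlapCard n m := by
  have interval_le : (Finset.Ico (max 0 (-m)) (min n (n - m))).card ≤ overlapCard n m := by
    refine Finset.card_le_card_of_surjOn (fun x : Fin n => (x : ℤ)) fun y hy => ?_
    simp only [Finset.coe_Ico, mem_Ico] at hy
    refine ⟨⟨y.toNat, by omega⟩, ?_, by simp; omega⟩
    simp only [Finset.coe_filter, Finset.mem_univ, true_and, mem_ofPred_eq]
    omega
  rw [Int.card_Ico] at interval_le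
  cases abs_cases m <;> omega

lemma tendsto_overlapCard_div (m : ℤ) :
    Tendsto (fun n : ℕ => (overlapCard n m : ℝ) / n) atTop (𝓝 1) := by
  have lower : Tendsto (fun n : ℕ => 1 - (|m| : ℝ) / n) atTop (𝓝 1) := by
    simpa using tendsto_const_nhds.sub (tendsto_const_div_atTop_nhds_zero_nat (|m| : ℝ))
  refine tendsto_of_tendsto_of_tendsto_of_le_of_le' lower tendsto_const_nhds ?_
    (Eventually.of_forall fun n => div_le_one_of_le₀ (mod_cast overlapCard_le n m) n.cast_nonneg)
  filter_upwards [eventually_gt_atTop 0] with n hn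
  have hn' : (0 : ℝ) < n := mod_cast hn
  rw [one_sub_div hn'.ne']
  gcongr
  exact_mod_cast sub_abs_le_overlapCard n m

variable {ν : ℕ}

open Classical in
/-- The proportion of points of the box `{0, …, n-1}^ν` that leave it after translation by `m`. -/
def boxDefect (n : ℕ) (m : Fin ν → ℤ) : ℝ :=
  Finset.card {k : Fin ν → Fin n | m + boxToInt ν n k ∉ range (boxToInt ν n)} / (n : ℝ) ^ ν

lemma boxDefect_nonneg (n : ℕ) (m : Fin ν → ℤ) : 0 ≤ boxDefect n m := by
  unfold boxDefect
  positivity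

lemma boxDefect_le_one (n : ℕ) (m : Fin ν → ℤ) : boxDefect n m ≤ 1 :=
  div_le_one_of_le₀ (mod_cast (Finset.card_le_univ _).trans_eq (by simp)) (by positivity)

lemma boxDefect_eq_one_sub_prod {n : ℕ} (hn : n ≠ 0) (m : Fin ν → ℤ) :
    boxDefect n m = 1 - ∏ i, (overlapCard n (m i) : ℝ) / n := by
  classical
  have staying_eq : Finset.card {k : Fin ν → Fin n | m + boxToInt ν n k ∈ range (boxToInt ν n)}
      = ∏ i, overlapCard n (m i) := by
    simp only [overlapCard]
    rw [← Fintype.card_piFinset]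
    congr 1
    ext k
    simp [mem_range_boxToInt, -mem_range]
  have total : Finset.card {k : Fin ν → Fin n | m + boxToInt ν n k ∈ range (boxToInt ν n)}
      + Finset.card {k : Fin ν → Fin n | m + boxToInt ν n k ∉ range (boxToInt ν n)} = n ^ ν := by
    rw [Finset.card_filter_add_card_filter_not]
    simp
  rw [staying_eq] at total
  have hn' : (n : ℝ) ^ ν ≠ 0 := by positivity
  rw [boxDefect, Finset.prod_div_distrib, Finset.prod_const, Finset.card_fin, one_sub_div hn',
    ← Nat.cast_pow, ← total]
  push_cast
  ring

lemma tendsto_boxDefect (m : Fin ν → ℤ) :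
    Tendsto (fun n : ℕ => boxDefect n m) atTop (𝓝 0) := by
  have limit : Tendsto (fun n : ℕ => 1 - ∏ i, (overlapCard n (m i) : ℝ) / n) atTop (𝓝 0) := by
    simpa using (tendsto_const_nhds (x := (1 : ℝ))).sub
      (tendsto_finsetProd Finset.univ fun i _ => tendsto_overlapCard_div (m i))
  refine limit.congr' ?_
  filter_upwards [eventually_ne_atTop 0] with n hn
  exact (boxDefect_eq_one_sub_prod hn m).symm

end BoxDefect

section ProductDefect

open Topology

variable {ν n : ℕ} {a b f : (Fin ν → ℝ) → ℂ}

/-- The part of `f` whose frequencies lie outside the box `{0, …, n-1}^ν`. -/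
def boxResidual (n : ℕ) (f : (Fin ν → ℝ) → ℂ) (x : Fin ν → ℝ) : ℂ :=
  f x - trigPoly (fun j : Fin ν → Fin n => fourierCoefficient f (boxToInt ν n j)) x

lemma memLp_boxResidual (hf : MemLp f 2 (cubeMeasure ν)) :
    MemLp (boxResidual n f) 2 (cubeMeasure ν) :=
  hf.sub ((memLp_top_trigPoly _).mono_exponent le_top)

open Classical in
lemma fourierCoefficient_boxResidual (hf : Integrable f (cubeMeasure ν)) (m : Fin ν → ℤ) :
    fourierCoefficient (boxResidual n f) m
      = if m ∉ range (boxToInt ν n) then fourierCoefficient f m else 0 := by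
  unfold boxResidual
  rw [fourierCoefficient_sub hf ((memLp_top_trigPoly _).integrable le_top)]
  split_ifs with hm
  · obtain ⟨j, rfl⟩ := hm
    rw [fourierCoefficient_trigPoly_boxToInt, sub_self]
  · rw [fourierCoefficient_trigPoly_of_notMem _ hm, sub_zero]

open Classical in
lemma hasSum_boxResidual_mul_torusChar (hb : MemLp b 2 (cubeMeasure ν)) (k : Fin ν → ℤ) :
    HasSum (fun m => if m + k ∉ range (boxToInt ν n) then ‖fourierCoefficient b m‖ ^ 2 else 0)
      (∫ x, ‖boxResidual n (fun x => b x * torusChar k x) x‖ ^ 2 ∂cubeMeasure ν) := by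
  have parseval := hasSum_norm_sq_fourierCoefficient
    (memLp_boxResidual (n := n) (memLp_mul_torusChar hb k))
  rw [← (Equiv.addRight k).hasSum_iff] at parseval
  convert parseval using 2 with m
  rw [Function.comp_apply, Equiv.coe_addRight, fourierCoefficient_boxResidual
    ((memLp_mul_torusChar hb k).integrable one_le_two), fourierCoefficient_mul_torusChar,
    add_sub_cancel_right]
  split_ifs <;> simp

lemma toeplitz_mul_sub_apply (ha : MemLp a ⊤ (cubeMeasure ν)) (hb : MemLp b 2 (cubeMeasure ν))
    (j k : Fin ν → Fin n) :
    (toeplitz n (fun x => a x * b x) - toeplitz n a * toeplitz n b) j k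
      = fourierCoefficient
          (fun x => a x * boxResidual n (fun x => b x * torusChar (boxToInt ν n k) x) x)
          (boxToInt ν n j) := by
  have a_int := ha.integrable le_top
  have ab_memLp : MemLp (fun x => a x * b x) 2 (cubeMeasure ν) := hb.mul' ha
  simp only [boxResidual, mul_sub, ← mul_assoc]
  rw [fourierCoefficient_sub (integrable_mul_torusChar (ab_memLp.integrable one_le_two) _)
      (((memLp_top_trigPoly _).mul' ha).integrable (q := ⊤) le_top),
    fourierCoefficient_mul_trigPoly a_int]
  simp only [fourierCoefficient_mul_torusChar]
  rfl

theorem normalizedHSNorm_toeplitz_mul_sub_sq_le {C : ℝ}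
    (ha : AEStronglyMeasurable a (cubeMeasure ν))
    (hC : ∀ᵐ x ∂cubeMeasure ν, ‖a x‖ ≤ C) (hb : MemLp b 2 (cubeMeasure ν)) :
    normalizedHSNorm (toeplitz n (fun x => a x * b x) - toeplitz n a * toeplitz n b) ^ 2
      ≤ C ^ 2 * ∑' m, boxDefect n m * ‖fourierCoefficient b m‖ ^ 2 := by
  classical
  have a_memLp : MemLp a ⊤ (cubeMeasure ν) := memLp_top_of_bound ha C hC
  let r (k : Fin ν → Fin n) := boxResidual n fun x => b x * torusChar (boxToInt ν n k) x
  have r_memLp (k : Fin ν → Fin n) : MemLp (r k) 2 (cubeMeasure ν) :=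
    memLp_boxResidual (memLp_mul_torusChar hb _)
  have column_le (k : Fin ν → Fin n) :
      ∑ j, ‖(toeplitz n (fun x => a x * b x) - toeplitz n a * toeplitz n b) j k‖ ^ 2
        ≤ C ^ 2 * ∫ x, ‖r k x‖ ^ 2 ∂cubeMeasure ν := by
    simp only [toeplitz_mul_sub_apply a_memLp hb]
    exact (sum_norm_sq_fourierCoefficient_le ((r_memLp k).mul' a_memLp)).trans
      (integral_norm_sq_mul_le hC (r_memLp k))
  have sum_residuals : HasSum (fun m => boxDefect n m * ‖fourierCoefficient b m‖ ^ 2)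
      ((∑ k, ∫ x, ‖r k x‖ ^ 2 ∂cubeMeasure ν) / (n : ℝ) ^ ν) := by
    simpa only [← Finset.sum_filter, Finset.sum_const, nsmul_eq_mul, boxDefect,
        div_mul_eq_mul_div] using
      (hasSum_sum (s := Finset.univ) fun k _ =>
        hasSum_boxResidual_mul_torusChar (n := n) hb (boxToInt ν n k)).div_const ((n : ℝ) ^ ν)
  rw [sum_residuals.tsum_eq, normalizedHSNorm_sq, mul_div_assoc', Finset.mul_sum, Fintype.card_fun,
    Fintype.card_fin, Fintype.card_fin, Nat.cast_pow]
  gcongr with k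
  exact column_le k

theorem tendsto_normalizedHSNorm_toeplitz_mul_sub (ha : MemLp a ⊤ (cubeMeasure ν))
    (hb : MemLp b 2 (cubeMeasure ν)) :
    Tendsto (fun n =>
      normalizedHSNorm (toeplitz n (fun x => a x * b x) - toeplitz n a * toeplitz n b))
      atTop (𝓝 0) := by
  obtain ⟨C, hC⟩ := exists_ae_norm_le_of_memLp_top ha
  have defect_tendsto : Tendsto (fun n : ℕ => ∑' m, boxDefect n m * ‖fourierCoefficient b m‖ ^ 2)
      atTop (𝓝 (∑' m : Fin ν → ℤ, 0 * ‖fourierCoefficient b m‖ ^ 2)) := by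
    refine tendsto_tsum_of_dominated_convergence (hasSum_norm_sq_fourierCoefficient hb).summable
      (fun m => (tendsto_boxDefect m).mul_const _) (Eventually.of_forall fun n m => ?_)
    rw [Real.norm_of_nonneg (mul_nonneg (boxDefect_nonneg n m) (by positivity))]
    exact mul_le_of_le_one_left (by positivity) (boxDefect_le_one n m)
  have sq_tendsto := squeeze_zero (fun n => sq_nonneg _)
    (fun n => normalizedHSNorm_toeplitz_mul_sub_sq_le (n := n) ha.aestronglyMeasurable hC hb)
    (by simpa using defect_tendsto.const_mul (C ^ 2))
  simpa [Real.sqrt_sq (normalizedHSNorm_nonneg _)] using sq_tendsto.sqrt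

end ProductDefect

section JointConvergence

open scoped Topology

lemma continuousWithinAt_of_tendsto_prod {ι α β : Type*} [TopologicalSpace α]
    [PseudoMetricSpace β] {l : Filter ι} [l.NeBot] {F : ι → α → β} {f : α → β} {s : Set α} {x : α}
    (h : ∀ y ∈ s, Tendsto (fun p : ι × α => F p.1 p.2) (l ×ˢ 𝓝[s] y) (𝓝 (f y))) (hx : x ∈ s) :
    ContinuousWithinAt f s x := by
  rw [ContinuousWithinAt, Metric.tendsto_nhds]
  intro ε hε
  have near : ∀ᶠ y in 𝓝[s] x, ∀ᶠ i in l, dist (F i y) (f x) < ε / 2 :=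
    (eventually_swap_iff.1 (Metric.tendsto_nhds.1 (h x hx) _ (half_pos hε))).curry
  filter_upwards [near, self_mem_nhdsWithin] with y hy hys
  have pointwise : Tendsto (fun i => F i y) l (𝓝 (f y)) :=
    (h y hys).comp (tendsto_id.prodMk (tendsto_const_nhdsWithin hys))
  have : dist (f y) (f x) ≤ ε / 2 :=
    le_of_tendsto (pointwise.dist tendsto_const_nhds) (hy.mono fun i hi => hi.le)
  linarith

theorem tendstoUniformlyOn_of_isCompact_of_tendsto_prod {ι α β : Type*} [TopologicalSpace α]
    [PseudoMetricSpace β] {l : Filter ι} {F : ι → α → β} {f : α → β} {s : Set α} (hs : IsCompact s)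
    (h : ∀ x ∈ s, Tendsto (fun p : ι × α => F p.1 p.2) (l ×ˢ 𝓝[s] x) (𝓝 (f x))) :
    TendstoUniformlyOn F f l s := by
  rcases l.eq_or_neBot with rfl | _
  · simp [TendstoUniformlyOn]
  rw [← tendstoLocallyUniformlyOn_iff_tendstoUniformlyOn_of_compact hs,
    tendstoLocallyUniformlyOn_iff_forall_tendsto]
  intro x hx
  have limit_tendsto : Tendsto (fun p : ι × α => f p.2) (l ×ˢ 𝓝[s] x) (𝓝 (f x)) :=
    (continuousWithinAt_of_tendsto_prod h hx).tendsto.comp tendsto_snd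
  exact (limit_tendsto.prodMk_nhds (h x hx)).mono_right (nhds_le_uniformity _)

end JointConvergence

section ToeplitzSymbol

open scoped Topology Matrix.Norms.L2Operator

variable {ν : ℕ} {ι : Type*} {l : Filter ι} {n : ι → ℕ}
  {A B : ∀ i, Matrix (Fin ν → Fin (n i)) (Fin ν → Fin (n i)) ℂ} {a b : (Fin ν → ℝ) → ℂ}

/-- The matrices `A i`, of sizes `n i ^ ν`, have the bounded function `a` as symbol along `l` if
they are eventually uniformly bounded and asymptotic to the Toeplitz compressions of `a` in the
normalized Hilbert–Schmidt norm. The index `i` need not be the size `n i`: a parameter of the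
matrices may vary jointly with it. -/
structure HasToeplitzSymbol (l : Filter ι) (n : ι → ℕ)
    (A : ∀ i, Matrix (Fin ν → Fin (n i)) (Fin ν → Fin (n i)) ℂ) (a : (Fin ν → ℝ) → ℂ) :
    Prop where
  memLp : MemLp a ⊤ (cubeMeasure ν)
  exists_norm_le : ∃ C : ℝ, ∀ᶠ i in l, ‖A i‖ ≤ C
  tendsto : Tendsto (fun i => normalizedHSNorm (A i - toeplitz (n i) a)) l (𝓝 0)

lemma hasToeplitzSymbol_toeplitz (ha : MemLp a ⊤ (cubeMeasure ν)) :
    HasToeplitzSymbol l n (fun i => toeplitz (n i) a) a where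
  memLp := ha
  exists_norm_le := by
    obtain ⟨C, hC⟩ := exists_ae_norm_le_of_memLp_top ha
    exact ⟨C, Eventually.of_forall fun i => norm_toeplitz_le ha.aestronglyMeasurable hC⟩
  tendsto := by simpa using tendsto_const_nhds

namespace HasToeplitzSymbol

lemma congr (hA : HasToeplitzSymbol l n A a) (h : ∀ᶠ i in l, A i = B i) :
    HasToeplitzSymbol l n B a where
  memLp := hA.memLp
  exists_norm_le := by
    obtain ⟨C, hC⟩ := hA.exists_norm_le
    refine ⟨C, ?_⟩
    filter_upwards [hC, h] with i hi hAB
    rwa [← hAB]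
  tendsto := hA.tendsto.congr' (h.mono fun i hi => by rw [hi])

lemma congr_symbol (hA : HasToeplitzSymbol l n A a) (h : a =ᵐ[cubeMeasure ν] b) :
    HasToeplitzSymbol l n A b where
  memLp := (memLp_congr_ae h).1 hA.memLp
  exists_norm_le := hA.exists_norm_le
  tendsto := by simpa only [toeplitz_congr_ae h] using hA.tendsto

lemma add (hA : HasToeplitzSymbol l n A a) (hB : HasToeplitzSymbol l n B b) :
    HasToeplitzSymbol l n (fun i => A i + B i) fun x => a x + b x where
  memLp := hA.memLp.add hB.memLp
  exists_norm_le := by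
    obtain ⟨C, hC⟩ := hA.exists_norm_le
    obtain ⟨D, hD⟩ := hB.exists_norm_le
    refine ⟨C + D, ?_⟩
    filter_upwards [hC, hD] with i hCi hDi
    exact (norm_add_le _ _).trans (add_le_add hCi hDi)
  tendsto := by
    refine squeeze_zero (fun i => normalizedHSNorm_nonneg _) (fun i => ?_)
      (by simpa using hA.tendsto.add hB.tendsto)
    rw [toeplitz_add (hA.memLp.integrable le_top) (hB.memLp.integrable le_top), add_sub_add_comm]
    exact normalizedHSNorm_add_le _ _

theorem mul (hn : Tendsto n l atTop) (hA : HasToeplitzSymbol l n A a)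
    (hB : HasToeplitzSymbol l n B b) :
    HasToeplitzSymbol l n (fun i => A i * B i) fun x => a x * b x := by
  obtain ⟨C, hC⟩ := hA.exists_norm_le
  obtain ⟨D, hD⟩ := hB.exists_norm_le
  obtain ⟨E, hE⟩ := (hasToeplitzSymbol_toeplitz (l := l) (n := n) hA.memLp).exists_norm_le
  refine ⟨hB.memLp.mul' hA.memLp, ⟨C * D, ?_⟩, ?_⟩
  · filter_upwards [hC, hD] with i hCi hDi
    exact norm_mul_le_of_le hCi hDi
  have defect_tendsto := (tendsto_normalizedHSNorm_toeplitz_mul_sub hA.memLp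
    (hB.memLp.mono_exponent le_top)).comp hn
  refine squeeze_zero' (Eventually.of_forall fun i => normalizedHSNorm_nonneg _) ?_
    (by simpa using ((hA.tendsto.mul_const D).add (hB.tendsto.const_mul E)).add defect_tendsto)
  filter_upwards [hD, hE] with i hDi hEi
  have left_le : normalizedHSNorm (A i * B i - toeplitz (n i) a * B i)
      ≤ normalizedHSNorm (A i - toeplitz (n i) a) * D := by
    rw [← sub_mul]
    exact (normalizedHSNorm_mul_le' _ _).trans
      (mul_le_mul_of_nonneg_left hDi (normalizedHSNorm_nonneg _))
  have right_le : normalizedHSNorm (toeplitz (n i) a * B i - toeplitz (n i) a * toeplitz (n i) b)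
      ≤ E * normalizedHSNorm (B i - toeplitz (n i) b) := by
    rw [← mul_sub]
    exact (normalizedHSNorm_mul_le _ _).trans
      (mul_le_mul_of_nonneg_right hEi (normalizedHSNorm_nonneg _))
  calc normalizedHSNorm (A i * B i - toeplitz (n i) fun x => a x * b x)
      ≤ normalizedHSNorm (A i * B i - toeplitz (n i) a * toeplitz (n i) b)
        + normalizedHSNorm (toeplitz (n i) a * toeplitz (n i) b
          - toeplitz (n i) fun x => a x * b x) := normalizedHSNorm_sub_le _ _ _
    _ ≤ _ := by
      rw [normalizedHSNorm_sub_comm (_ * _) (toeplitz _ _)]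
      gcongr
      exact (normalizedHSNorm_sub_le _ _ _).trans (add_le_add left_le right_le)

lemma aeval {R : Type*} [CommSemiring R] [Algebra R ℂ] (hn : Tendsto n l atTop)
    (hA : HasToeplitzSymbol l n A a) (p : Polynomial R) :
    HasToeplitzSymbol l n (fun i => Polynomial.aeval (A i) p)
      fun x => Polynomial.aeval (a x) p := by
  induction p using Polynomial.induction_on with
  | C r =>
    simpa only [Polynomial.aeval_C, toeplitz_const, ← IsScalarTower.algebraMap_apply] using
      hasToeplitzSymbol_toeplitz (l := l) (n := n) (memLp_const (algebraMap R ℂ r))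
  | add p q hp hq => simpa only [map_add] using hp.add hq
  | monomial k r h =>
    simpa only [pow_succ, map_mul, ← mul_assoc, Polynomial.aeval_X] using h.mul hn hA

theorem tendsto_trace (hn : Tendsto n l atTop) (hA : HasToeplitzSymbol l n A a) :
    Tendsto (fun i => ((n i : ℂ) ^ ν)⁻¹ * (A i).trace) l (𝓝 (∫ x, a x ∂cubeMeasure ν)) := by
  rw [tendsto_iff_norm_sub_tendsto_zero]
  refine squeeze_zero' (Eventually.of_forall fun i => norm_nonneg _) ?_ hA.tendsto
  filter_upwards [hn.eventually_gt_atTop 0] with i hi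
  have size_ne_zero : (n i : ℂ) ^ ν ≠ 0 := pow_ne_zero _ (Nat.cast_ne_zero.2 hi.ne')
  have trace_sub_eq : ((n i : ℂ) ^ ν)⁻¹ * (A i).trace - ∫ x, a x ∂cubeMeasure ν
      = ((n i : ℂ) ^ ν)⁻¹ * (A i - toeplitz (n i) a).trace := by
    rw [trace_sub, trace_toeplitz, mul_sub, inv_mul_cancel_left₀ size_ne_zero]
  rw [trace_sub_eq, norm_mul, norm_inv, norm_pow, Complex.norm_natCast,
    inv_mul_le_iff₀ (by positivity)]
  simpa using norm_trace_le_card_mul_normalizedHSNorm (A i - toeplitz (n i) a)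

lemma integrable_re {q : (Fin ν → ℝ) → ℝ} (hA : HasToeplitzSymbol l n A fun x => (q x : ℂ)) :
    Integrable q (cubeMeasure ν) := by
  simpa using (hA.memLp.integrable le_top).re

lemma tendsto_re_trace {q : (Fin ν → ℝ) → ℝ} (hn : Tendsto n l atTop)
    (hA : HasToeplitzSymbol l n A fun x => (q x : ℂ)) :
    Tendsto (fun i => ((n i : ℝ) ^ ν)⁻¹ * (A i).trace.re) l (𝓝 (∫ x, q x ∂cubeMeasure ν)) := by
  have h := (Complex.continuous_re.tendsto _).comp (hA.tendsto_trace hn)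
  rw [integral_complex_ofReal, Complex.ofReal_re] at h
  refine h.congr fun i => ?_
  rw [Function.comp_apply, ← Complex.ofReal_natCast, ← Complex.ofReal_pow, ← Complex.ofReal_inv,
    Complex.re_ofReal_mul]

theorem of_forall_exists_near (ha : MemLp a ⊤ (cubeMeasure ν))
    (h : ∀ ε > 0, ∃ B b, HasToeplitzSymbol l n B b ∧ (∀ᶠ i in l, ‖A i - B i‖ ≤ ε) ∧
      ∀ᵐ x ∂cubeMeasure ν, ‖b x - a x‖ ≤ ε) :
    HasToeplitzSymbol l n A a := by
  refine ⟨ha, ?_, ?_⟩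
  · obtain ⟨B, b, hB, near, -⟩ := h 1 one_pos
    obtain ⟨C, hC⟩ := hB.exists_norm_le
    refine ⟨1 + C, ?_⟩
    filter_upwards [near, hC] with i hi hCi
    simpa using norm_add_le_of_le hi hCi
  rw [Metric.tendsto_nhds]
  intro ε hε
  obtain ⟨B, b, hB, matrix_near, symbol_near⟩ := h (ε / 4) (by positivity)
  filter_upwards [matrix_near, hB.tendsto.eventually_le_const (show 0 < ε / 4 by positivity)]
    with i hi hBi
  have toeplitz_near : ‖toeplitz (n i) b - toeplitz (n i) a‖ ≤ ε / 4 := by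
    rw [← toeplitz_sub (hB.memLp.integrable le_top) (ha.integrable le_top)]
    exact norm_toeplitz_le (hB.memLp.sub ha).aestronglyMeasurable symbol_near
  rw [dist_zero_right, Real.norm_of_nonneg (normalizedHSNorm_nonneg _)]
  calc normalizedHSNorm (A i - toeplitz (n i) a)
      ≤ normalizedHSNorm (A i - B i) + (normalizedHSNorm (B i - toeplitz (n i) b)
        + normalizedHSNorm (toeplitz (n i) b - toeplitz (n i) a)) := by
        grw [normalizedHSNorm_sub_le _ (B i), normalizedHSNorm_sub_le (B i) (toeplitz (n i) b)]
    _ ≤ ε / 4 + (ε / 4 + ε / 4) := by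
        gcongr
        · exact (normalizedHSNorm_le_norm _).trans hi
        · exact (normalizedHSNorm_le_norm _).trans toeplitz_near
    _ < ε := by linarith

end HasToeplitzSymbol

end ToeplitzSymbol

section FunctionalCalculus

open scoped Topology Matrix.Norms.L2Operator

variable {ν : ℕ} {ι : Type*} {l : Filter ι} {n : ι → ℕ}
  {A : ∀ i, Matrix (Fin ν → Fin (n i)) (Fin ν → Fin (n i)) ℂ} {q : (Fin ν → ℝ) → ℝ} {c d : ℝ}

lemma memLp_top_ofReal_comp {f : ℝ → ℝ} (hq : AEMeasurable q (cubeMeasure ν))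
    (hqcd : ∀ᵐ x ∂cubeMeasure ν, q x ∈ Icc c d) (hf : ContinuousOn f (Icc c d)) :
    MemLp (fun x => (f (q x) : ℂ)) ⊤ (cubeMeasure ν) := by
  have le : c ≤ d := let ⟨_, hx⟩ := hqcd.exists; hx.1.trans hx.2
  obtain ⟨K, hK⟩ := isCompact_Icc.exists_bound_of_continuousOn hf
  have extend_eq : (fun x => IccExtend le ((Icc c d).domRestrict f) (q x))
      =ᵐ[cubeMeasure ν] fun x => f (q x) := by
    filter_upwards [hqcd] with x hx
    rw [IccExtend_of_mem _ _ hx, domRestrict_apply]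
  have measurable_comp : AEMeasurable (fun x => f (q x)) (cubeMeasure ν) :=
    (hf.domRestrict.Icc_extend' (h := le).measurable.comp_aemeasurable hq).congr extend_eq
  refine memLp_top_ofReal measurable_comp (c := -K) (d := K) ?_
  filter_upwards [hqcd] with x hx
  exact abs_le.1 (hK _ hx)

lemma norm_cfc_sub_aeval_le {m : Type*} [Fintype m] [DecidableEq m] {X : Matrix m m ℂ}
    {f : ℝ → ℝ} {p : Polynomial ℝ} {ε : ℝ} (hX : IsSelfAdjoint X) (hε : 0 ≤ ε)
    (h : ∀ x ∈ spectrum ℝ X, |f x - p.eval x| ≤ ε) : ‖cfc f X - Polynomial.aeval X p‖ ≤ ε := by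
  rw [← cfc_polynomial p X hX, ← cfc_sub f p.eval X (X.finite_real_spectrum.continuousOn _)]
  exact norm_cfc_le hε h

namespace HasToeplitzSymbol

theorem cfc {f : ι → ℝ → ℝ} {f₀ : ℝ → ℝ} (hn : Tendsto n l atTop)
    (hA : HasToeplitzSymbol l n A fun x => (q x : ℂ)) (hsa : ∀ᶠ i in l, IsSelfAdjoint (A i))
    (hspec : ∀ᶠ i in l, spectrum ℝ (A i) ⊆ Icc c d) (hq : ∀ᵐ x ∂cubeMeasure ν, q x ∈ Icc c d)
    (hf₀ : ContinuousOn f₀ (Icc c d)) (hf : TendstoUniformlyOn f f₀ l (Icc c d)) :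
    HasToeplitzSymbol l n (fun i => cfc (f i) (A i)) fun x => (f₀ (q x) : ℂ) := by
  have q_measurable : AEMeasurable q (cubeMeasure ν) := by
    simpa using hA.memLp.aestronglyMeasurable.aemeasurable.re
  refine of_forall_exists_near (memLp_top_ofReal_comp q_measurable hq hf₀) fun ε hε => ?_
  obtain ⟨p, hp⟩ := exists_polynomial_near_of_continuousOn c d f₀ hf₀ _ (half_pos hε)
  refine ⟨_, _, hA.aeval hn p, ?_, ?_⟩
  · filter_upwards [hsa, hspec, Metric.tendstoUniformlyOn_iff.1 hf _ (half_pos hε)]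
      with i hi hsub hfi
    refine norm_cfc_sub_aeval_le hi hε.le fun x hx => ?_
    have f_near := hfi x (hsub hx)
    have p_near := hp x (hsub hx)
    rw [dist_comm, Real.dist_eq] at f_near
    rw [abs_sub_comm] at p_near
    linarith [abs_sub_le (f i x) (f₀ x) (p.eval x)]
  · filter_upwards [hq] with x hx
    have aeval_eq : Polynomial.aeval (q x : ℂ) p = (p.eval (q x) : ℝ) := by
      rw [← Complex.coe_algebraMap, Polynomial.aeval_algebraMap_apply_eq_algebraMap_eval]
    rw [aeval_eq, ← Complex.ofReal_sub, Complex.norm_real]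
    exact (hp _ hx).le.trans (half_le_self hε.le)

theorem mlog (hn : Tendsto n l atTop) (hA : HasToeplitzSymbol l n A fun x => (q x : ℂ))
    (hsa : ∀ᶠ i in l, IsSelfAdjoint (A i)) (hspec : ∀ᶠ i in l, spectrum ℝ (A i) ⊆ Icc c d)
    (hq : ∀ᵐ x ∂cubeMeasure ν, q x ∈ Icc c d) (hc : 0 < c) :
    HasToeplitzSymbol l n (fun i => mlog (A i)) fun x => (Real.log (q x) : ℂ) :=
  hA.cfc hn hsa hspec hq
    (fun _ hx => (Real.continuousAt_log (hc.trans_le hx.1).ne').continuousWithinAt)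
    fun _ hu => Eventually.of_forall fun _ _ _ => refl_mem_uniformity hu

theorem mpow {s : ι → ℝ} {s₀ : ℝ} (hn : Tendsto n l atTop)
    (hA : HasToeplitzSymbol l n A fun x => (q x : ℂ)) (hsa : ∀ᶠ i in l, IsSelfAdjoint (A i))
    (hspec : ∀ᶠ i in l, spectrum ℝ (A i) ⊆ Icc c d) (hq : ∀ᵐ x ∂cubeMeasure ν, q x ∈ Icc c d)
    (hc : 0 < c) (hs : Tendsto s l (𝓝 s₀)) :
    HasToeplitzSymbol l n (fun i => mpow (A i) (s i)) fun x => (q x ^ s₀ : ℝ) := by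
  have ne_zero {x : ℝ} (hx : x ∈ Icc c d) : x ≠ 0 := (hc.trans_le hx.1).ne'
  refine hA.cfc hn hsa hspec hq
    (fun x hx => (Real.continuousAt_rpow_const x s₀ (.inl (ne_zero hx))).continuousWithinAt) ?_
  refine tendstoUniformlyOn_of_isCompact_of_tendsto_prod isCompact_Icc fun x hx => ?_
  exact (tendsto_snd.mono_right nhdsWithin_le_nhds).rpow (hs.comp tendsto_fst) (.inl (ne_zero hx))

end HasToeplitzSymbol

end FunctionalCalculus

section Resolvent

open scoped Matrix.Norms.L2Operator

variable {m : Type*} [Fintype m] [DecidableEq m] {Q Q₁ Q₂ : Matrix m m ℂ} {c d δ s t : ℝ}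

lemma cfc_div_add_one (hQ : IsSelfAdjoint Q) (hspec : spectrum ℝ Q ⊆ Ioi (-1)) :
    cfc (fun x : ℝ => x / (x + 1)) Q = Rmat Q := by
  have continuousOn (f : ℝ → ℝ) : ContinuousOn f (spectrum ℝ Q) :=
    Q.finite_real_spectrum.continuousOn f
  have cfc_add_one : cfc (fun x : ℝ => x + 1) Q = Q + 1 := by
    rw [cfc_add_const 1 (fun x => x) Q (continuousOn _), cfc_id' ℝ Q, map_one]
  have inv_mul : cfc (fun x : ℝ => (x + 1)⁻¹) Q * (Q + 1) = 1 := by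
    rw [← cfc_add_one, ← cfc_mul _ _ Q (continuousOn _) (continuousOn _), ← cfc_const_one ℝ Q]
    refine cfc_congr fun x hx => inv_mul_cancel₀ ?_
    linarith [mem_Ioi.1 (hspec hx)]
  simp only [Rmat, inv_eq_left_inv inv_mul, div_eq_mul_inv]
  rw [cfc_mul _ _ Q (continuousOn _) (continuousOn _), cfc_id' ℝ Q]

lemma isSelfAdjoint_Rmat (hQ : IsSelfAdjoint Q) (hspec : spectrum ℝ Q ⊆ Ioi (-1)) :
    IsSelfAdjoint (Rmat Q) := by
  rw [← cfc_div_add_one hQ hspec]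
  exact cfc_predicate _ _

lemma div_add_one_mem_Icc {x : ℝ} (hc : -1 < c) (hx : x ∈ Icc c d) :
    x / (x + 1) ∈ Icc (c / (c + 1)) (d / (d + 1)) := by
  have x_gt : -1 < x := hc.trans_le hx.1
  have d_gt : -1 < d := x_gt.trans_le hx.2
  rw [mem_Icc, div_le_div_iff₀ (by linarith) (by linarith),
    div_le_div_iff₀ (by linarith) (by linarith)]
  constructor <;> linarith [hx.1, hx.2]

lemma spectrum_Rmat_subset_Icc (hQ : IsSelfAdjoint Q) (hspec : spectrum ℝ Q ⊆ Icc c d)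
    (hc : -1 < c) : spectrum ℝ (Rmat Q) ⊆ Icc (c / (c + 1)) (d / (d + 1)) := by
  rw [← cfc_div_add_one hQ fun x hx => hc.trans_le (hspec hx).1,
    cfc_map_spectrum _ Q hQ (Q.finite_real_spectrum.continuousOn _)]
  rintro _ ⟨x, hx, rfl⟩
  exact div_add_one_mem_Icc hc (hspec hx)

lemma isSelfAdjoint_Wmat (Q₁ Q₂ : Matrix m m ℂ) (t : ℝ) : IsSelfAdjoint (Wmat Q₁ Q₂ t) := by
  have star_mpow (X : Matrix m m ℂ) (s : ℝ) : star (mpow X s) = mpow X s :=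
    (cfc_predicate (fun x : ℝ => x ^ s) X : IsSelfAdjoint _)
  rw [IsSelfAdjoint, Wmat, star_mul, star_mul, star_mpow, star_mpow, mul_assoc]

lemma norm_mpow_le {X : Matrix m m ℂ} (hspec : spectrum ℝ X ⊆ Icc 0 d) (hd : 0 ≤ d) (hs : 0 ≤ s) :
    ‖mpow X s‖ ≤ d ^ s := by
  refine norm_cfc_le (by positivity) fun x hx => ?_
  obtain ⟨x_nonneg, x_le⟩ := hspec hx
  rw [Real.norm_of_nonneg (by positivity)]
  gcongr

lemma norm_Wmat_le (h₁ : spectrum ℝ (Rmat Q₁) ⊆ Icc 0 δ) (h₂ : spectrum ℝ (Rmat Q₂) ⊆ Icc 0 δ)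
    (hδ : 0 < δ) (ht : t ∈ Icc (0 : ℝ) 1) : ‖Wmat Q₁ Q₂ t‖ ≤ δ := by
  have norm_half_le := norm_mpow_le h₁ hδ.le (div_nonneg ht.1 zero_le_two)
  have norm_sub_le := norm_mpow_le h₂ hδ.le (sub_nonneg.2 ht.2)
  calc ‖Wmat Q₁ Q₂ t‖ ≤ δ ^ (t / 2) * δ ^ (1 - t) * δ ^ (t / 2) :=
        norm_mul_le_of_le (norm_mul_le_of_le norm_half_le norm_sub_le) norm_half_le
    _ = δ := by
        rw [← Real.rpow_add hδ, ← Real.rpow_add hδ]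
        ring_nf
        exact Real.rpow_one δ

lemma spectrum_one_sub_Wmat_subset_Icc (h₁ : spectrum ℝ (Rmat Q₁) ⊆ Icc 0 δ)
    (h₂ : spectrum ℝ (Rmat Q₂) ⊆ Icc 0 δ) (hδ : 0 < δ) (ht : t ∈ Icc (0 : ℝ) 1) :
    spectrum ℝ (1 - Wmat Q₁ Q₂ t) ⊆ Icc (1 - δ) (1 + δ) := by
  refine spectrum_subset_Icc_of_norm_sub_le ?_
  simpa using norm_Wmat_le h₁ h₂ hδ ht

end Resolvent

section ScalarSymbol

variable {a b M t : ℝ}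

/-- The scalar counterpart `r₁^t r₂^(1-t)`, with `r₁ = a / (a + 1)` and `r₂ = b / (b + 1)`, of the
matrix `Wmat`: its composition with two functions is the symbol of the `Wmat` of their Toeplitz
compressions. -/
def scalarW (a b t : ℝ) : ℝ := (a / (a + 1)) ^ t * (b / (b + 1)) ^ (1 - t)

lemma rpow_half_mul_rpow_mul_rpow_half_eq_scalarW (ha : 0 < a) (b t : ℝ) :
    (a / (a + 1)) ^ (t / 2) * (b / (b + 1)) ^ (1 - t) * (a / (a + 1)) ^ (t / 2)
      = scalarW a b t := by
  rw [mul_right_comm, ← Real.rpow_add (by positivity), add_halves, scalarW]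

lemma scalarW_mem_Icc (ha : a ∈ Ioc 0 M) (hb : b ∈ Ioc 0 M) (ht : t ∈ Icc (0 : ℝ) 1) :
    scalarW a b t ∈ Icc 0 (M / (M + 1)) := by
  have M_pos : 0 < M := ha.1.trans_le ha.2
  obtain ⟨ra_nonneg, ra_le⟩ := div_add_one_mem_Icc (c := 0) (by norm_num) ⟨ha.1.le, ha.2⟩
  obtain ⟨rb_nonneg, rb_le⟩ := div_add_one_mem_Icc (c := 0) (by norm_num) ⟨hb.1.le, hb.2⟩
  rw [zero_div] at ra_nonneg rb_nonneg
  refine ⟨mul_nonneg (by positivity) (by positivity), ?_⟩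
  calc scalarW a b t ≤ (M / (M + 1)) ^ t * (M / (M + 1)) ^ (1 - t) := by
        unfold scalarW
        gcongr
        · exact ht.1
        · exact sub_nonneg.2 ht.2
    _ = M / (M + 1) := by
        rw [← Real.rpow_add (by positivity), add_sub_cancel, Real.rpow_one]

lemma log_rpow_mul_rpow_sub (ha : 0 < a) (hb : 0 < b) (hw : scalarW a b t < 1) :
    Real.log ((1 + a) ^ t * (1 + b) ^ (1 - t) - a ^ t * b ^ (1 - t))
      = t * Real.log (a + 1) + (1 - t) * Real.log (b + 1) + Real.log (1 - scalarW a b t) := by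
  have factor : (1 + a) ^ t * (1 + b) ^ (1 - t) - a ^ t * b ^ (1 - t)
      = (a + 1) ^ t * (b + 1) ^ (1 - t) * (1 - scalarW a b t) := by
    rw [scalarW, Real.div_rpow ha.le (by positivity), Real.div_rpow hb.le (by positivity),
      add_comm 1 a, add_comm 1 b]
    field_simp
  rw [factor, Real.log_mul (by positivity) (sub_pos.2 hw).ne',
    Real.log_mul (by positivity) (by positivity), Real.log_rpow (by positivity),
    Real.log_rpow (by positivity)]

end ScalarSymbol

section Overlap

open scoped Topology Matrix.Norms.L2Operator

variable {ν : ℕ} {ι : Type*} {l : Filter ι} {n : ι → ℕ} {q q₁ q₂ : (Fin ν → ℝ) → ℝ} {c η M t : ℝ}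
  {s : ι → ℝ}

lemma toeplitz_add_one {N : ℕ} (hq : Integrable q (cubeMeasure ν)) :
    toeplitz N (fun x => (q x : ℂ)) + 1 = toeplitz N fun x => ((q x + 1 : ℝ) : ℂ) := by
  simpa [toeplitz_const] using (toeplitz_add (n := N) hq.ofReal (integrable_const (1 : ℂ))).symm

lemma hasToeplitzSymbol_mlog_toeplitz_add_one (hn : Tendsto n l atTop)
    (hq : AEMeasurable q (cubeMeasure ν)) (hqM : ∀ᵐ x ∂cubeMeasure ν, q x ∈ Icc c M)
    (hc : -1 < c) :
    HasToeplitzSymbol l n (fun i => mlog (toeplitz (n i) (fun x => (q x : ℂ)) + 1))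
      fun x => (Real.log (q x + 1) : ℂ) := by
  have add_one_mem : ∀ᵐ x ∂cubeMeasure ν, q x + 1 ∈ Icc (c + 1) (M + 1) :=
    hqM.mono fun x hx => ⟨by linarith [hx.1], by linarith [hx.2]⟩
  have add_one_measurable : AEMeasurable (fun x => q x + 1) (cubeMeasure ν) := hq.add_const 1
  simp only [toeplitz_add_one (Integrable.of_mem_Icc c M hq hqM)]
  exact (hasToeplitzSymbol_toeplitz (memLp_top_ofReal add_one_measurable add_one_mem)).mlog hn
    (.of_forall fun i => isSelfAdjoint_toeplitz_ofReal _)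
    (.of_forall fun i => spectrum_toeplitz_subset_Icc add_one_measurable add_one_mem)
    add_one_mem (by linarith)

lemma spectrum_Rmat_toeplitz_subset_Icc {N : ℕ} (hq : AEMeasurable q (cubeMeasure ν))
    (hqM : ∀ᵐ x ∂cubeMeasure ν, q x ∈ Icc c M) (hc : -1 < c) :
    spectrum ℝ (Rmat (toeplitz N fun x => (q x : ℂ))) ⊆ Icc (c / (c + 1)) (M / (M + 1)) :=
  spectrum_Rmat_subset_Icc (isSelfAdjoint_toeplitz_ofReal q) (spectrum_toeplitz_subset_Icc hq hqM)
    hc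

lemma hasToeplitzSymbol_Rmat_toeplitz (hn : Tendsto n l atTop)
    (hq : AEMeasurable q (cubeMeasure ν)) (hqM : ∀ᵐ x ∂cubeMeasure ν, q x ∈ Icc c M)
    (hc : -1 < c) :
    HasToeplitzSymbol l n (fun i => Rmat (toeplitz (n i) fun x => (q x : ℂ)))
      fun x => (q x / (q x + 1) : ℝ) := by
  have spectrum_subset (i : ι) := spectrum_toeplitz_subset_Icc (n := n i) hq hqM
  have continuousOn : ContinuousOn (fun x : ℝ => x / (x + 1)) (Icc c M) :=
    continuousOn_id.div (by fun_prop) fun x hx => by linarith [hx.1]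
  refine ((hasToeplitzSymbol_toeplitz (memLp_top_ofReal hq hqM)).cfc hn
    (.of_forall fun i => isSelfAdjoint_toeplitz_ofReal q) (.of_forall spectrum_subset) hqM
    continuousOn fun _ hu => .of_forall fun _ _ _ => refl_mem_uniformity hu).congr
    (.of_forall fun i => ?_)
  exact cfc_div_add_one (isSelfAdjoint_toeplitz_ofReal q)
    fun x hx => hc.trans_le (spectrum_subset i hx).1

lemma hasToeplitzSymbol_mpow_Rmat_toeplitz (hn : Tendsto n l atTop)
    (hq : AEMeasurable q (cubeMeasure ν)) (hqM : ∀ᵐ x ∂cubeMeasure ν, q x ∈ Icc η M)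
    (hη : 0 < η) (hs : Tendsto s l (𝓝 t)) :
    HasToeplitzSymbol l n (fun i => mpow (Rmat (toeplitz (n i) fun x => (q x : ℂ))) (s i))
      fun x => ((q x / (q x + 1)) ^ t : ℝ) := by
  have η_gt : -1 < η := by linarith
  exact (hasToeplitzSymbol_Rmat_toeplitz hn hq hqM η_gt).mpow hn
    (.of_forall fun i => isSelfAdjoint_Rmat (isSelfAdjoint_toeplitz_ofReal q)
      fun x hx => η_gt.trans_le (spectrum_toeplitz_subset_Icc hq hqM hx).1)
    (.of_forall fun i => spectrum_Rmat_toeplitz_subset_Icc hq hqM η_gt)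
    (hqM.mono fun x hx => div_add_one_mem_Icc η_gt hx) (by positivity) hs

lemma hasToeplitzSymbol_Wmat_toeplitz (hn : Tendsto n l atTop)
    (hq₁ : AEMeasurable q₁ (cubeMeasure ν)) (hqM₁ : ∀ᵐ x ∂cubeMeasure ν, q₁ x ∈ Icc η M)
    (hq₂ : AEMeasurable q₂ (cubeMeasure ν)) (hqM₂ : ∀ᵐ x ∂cubeMeasure ν, q₂ x ∈ Icc η M)
    (hη : 0 < η) (hs : Tendsto s l (𝓝 t)) :
    HasToeplitzSymbol l n
      (fun i => Wmat (toeplitz (n i) fun x => (q₁ x : ℂ)) (toeplitz (n i) fun x => (q₂ x : ℂ))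
        (s i))
      fun x => (scalarW (q₁ x) (q₂ x) t : ℝ) := by
  have outer := hasToeplitzSymbol_mpow_Rmat_toeplitz hn hq₁ hqM₁ hη (hs.div_const 2)
  have inner := hasToeplitzSymbol_mpow_Rmat_toeplitz hn hq₂ hqM₂ hη (hs.const_sub 1)
  refine ((outer.mul hn inner).mul hn outer).congr_symbol ?_
  filter_upwards [hqM₁] with x hx
  rw [← rpow_half_mul_rpow_mul_rpow_half_eq_scalarW (hη.trans_le hx.1)]
  push_cast
  rfl

lemma spectrum_one_sub_Wmat_toeplitz_subset_Icc {N : ℕ}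
    (hq₁ : AEMeasurable q₁ (cubeMeasure ν)) (hqM₁ : ∀ᵐ x ∂cubeMeasure ν, q₁ x ∈ Icc 0 M)
    (hq₂ : AEMeasurable q₂ (cubeMeasure ν)) (hqM₂ : ∀ᵐ x ∂cubeMeasure ν, q₂ x ∈ Icc 0 M)
    (hM : 0 < M) (ht : t ∈ Icc (0 : ℝ) 1) :
    spectrum ℝ (1 - Wmat (toeplitz N fun x => (q₁ x : ℂ)) (toeplitz N fun x => (q₂ x : ℂ)) t)
      ⊆ Icc (1 - M / (M + 1)) (1 + M / (M + 1)) := by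
  refine spectrum_one_sub_Wmat_subset_Icc ?_ ?_ (by positivity) ht
  · simpa using spectrum_Rmat_toeplitz_subset_Icc hq₁ hqM₁ neg_one_lt_zero
  · simpa using spectrum_Rmat_toeplitz_subset_Icc hq₂ hqM₂ neg_one_lt_zero

lemma hasToeplitzSymbol_mlog_one_sub_Wmat_toeplitz (hn : Tendsto n l atTop)
    (hq₁ : AEMeasurable q₁ (cubeMeasure ν)) (hqM₁ : ∀ᵐ x ∂cubeMeasure ν, q₁ x ∈ Icc η M)
    (hq₂ : AEMeasurable q₂ (cubeMeasure ν)) (hqM₂ : ∀ᵐ x ∂cubeMeasure ν, q₂ x ∈ Icc η M)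
    (hη : 0 < η) (hs : Tendsto s l (𝓝 t)) (hs_mem : ∀ᶠ i in l, s i ∈ Icc (0 : ℝ) 1)
    (ht : t ∈ Icc (0 : ℝ) 1) :
    HasToeplitzSymbol l n
      (fun i => mlog (1 - Wmat (toeplitz (n i) fun x => (q₁ x : ℂ))
        (toeplitz (n i) fun x => (q₂ x : ℂ)) (s i)))
      fun x => (Real.log (1 - scalarW (q₁ x) (q₂ x) t) : ℂ) := by
  obtain ⟨x, hx⟩ := hqM₁.exists
  have M_pos : 0 < M := hη.trans_le (hx.1.trans hx.2)
  have ratio_lt : M / (M + 1) < 1 := (div_lt_one (by positivity)).2 (lt_add_one M)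
  have one_sub_W := (hasToeplitzSymbol_Wmat_toeplitz hn hq₁ hqM₁ hq₂ hqM₂ hη hs).aeval hn
    (1 - Polynomial.X : Polynomial ℝ)
  simp only [map_sub, map_one, Polynomial.aeval_X, ← Complex.ofReal_one, ← Complex.ofReal_sub]
    at one_sub_W
  refine one_sub_W.mlog (c := 1 - M / (M + 1)) (d := 1 + M / (M + 1)) hn
    (.of_forall fun i => (IsSelfAdjoint.one _).sub (isSelfAdjoint_Wmat _ _ _)) ?_ ?_
    (sub_pos.2 ratio_lt)
  · filter_upwards [hs_mem] with i hi
    exact spectrum_one_sub_Wmat_toeplitz_subset_Icc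
      hq₁ (hqM₁.mono fun x hx => ⟨hη.le.trans hx.1, hx.2⟩)
      hq₂ (hqM₂.mono fun x hx => ⟨hη.le.trans hx.1, hx.2⟩) M_pos hi
  · filter_upwards [hqM₁, hqM₂] with x hx₁ hx₂
    obtain ⟨W_nonneg, W_le⟩ :=
      scalarW_mem_Icc ⟨hη.trans_le hx₁.1, hx₁.2⟩ ⟨hη.trans_le hx₂.1, hx₂.2⟩ ht
    constructor <;> linarith [div_pos M_pos (M_pos.trans (lt_add_one M))]

lemma psiLimit_eq_integral (hqM₁ : ∀ᵐ x ∂cubeMeasure ν, q₁ x ∈ Icc η M)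
    (hqM₂ : ∀ᵐ x ∂cubeMeasure ν, q₂ x ∈ Icc η M) (hη : 0 < η) (ht : t ∈ Icc (0 : ℝ) 1) :
    psiLimit q₁ q₂ t = -∫ x, t * Real.log (q₁ x + 1) + (1 - t) * Real.log (q₂ x + 1)
      + Real.log (1 - scalarW (q₁ x) (q₂ x) t) ∂cubeMeasure ν := by
  rw [psiLimit, ← smul_eq_mul, ← integral_cubeMeasure]
  refine congrArg _ (integral_congr_ae ?_)
  filter_upwards [hqM₁, hqM₂] with x hx₁ hx₂
  have q₁_pos : 0 < q₁ x := hη.trans_le hx₁.1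
  have q₂_pos : 0 < q₂ x := hη.trans_le hx₂.1
  have M_pos : 0 < M := q₁_pos.trans_le hx₁.2
  refine log_rpow_mul_rpow_sub q₁_pos q₂_pos ?_
  exact (scalarW_mem_Icc ⟨q₁_pos, hx₁.2⟩ ⟨q₂_pos, hx₂.2⟩ ht).2.trans_lt
    ((div_lt_one (by positivity)).2 (lt_add_one M))

theorem tendsto_psiN (hn : Tendsto n l atTop)
    (hq₁ : AEMeasurable q₁ (cubeMeasure ν)) (hqM₁ : ∀ᵐ x ∂cubeMeasure ν, q₁ x ∈ Icc η M)
    (hq₂ : AEMeasurable q₂ (cubeMeasure ν)) (hqM₂ : ∀ᵐ x ∂cubeMeasure ν, q₂ x ∈ Icc η M)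
    (hη : 0 < η) (hs : Tendsto s l (𝓝 t)) (hs_mem : ∀ᶠ i in l, s i ∈ Icc (0 : ℝ) 1)
    (ht : t ∈ Icc (0 : ℝ) 1) :
    Tendsto (fun i => ((n i : ℝ) ^ ν)⁻¹ * psiN q₁ q₂ (n i) (s i)) l (𝓝 (psiLimit q₁ q₂ t)) := by
  have symbol₁ := hasToeplitzSymbol_mlog_toeplitz_add_one hn hq₁ hqM₁ (by linarith)
  have symbol₂ := hasToeplitzSymbol_mlog_toeplitz_add_one hn hq₂ hqM₂ (by linarith)
  have symbolW :=
    hasToeplitzSymbol_mlog_one_sub_Wmat_toeplitz hn hq₁ hqM₁ hq₂ hqM₂ hη hs hs_mem ht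
  have limit := ((hs.neg.mul (symbol₁.tendsto_re_trace hn)).sub
    ((hs.const_sub 1).mul (symbol₂.tendsto_re_trace hn))).sub (symbolW.tendsto_re_trace hn)
  have integral_eq : psiLimit q₁ q₂ t = -t * ∫ x, Real.log (q₁ x + 1) ∂cubeMeasure ν
      - (1 - t) * ∫ x, Real.log (q₂ x + 1) ∂cubeMeasure ν
      - ∫ x, Real.log (1 - scalarW (q₁ x) (q₂ x) t) ∂cubeMeasure ν := by
    have weighted_integrable : Integrable
        (fun x => t * Real.log (q₁ x + 1) + (1 - t) * Real.log (q₂ x + 1)) (cubeMeasure ν) :=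
      (symbol₁.integrable_re.const_mul t).add (symbol₂.integrable_re.const_mul (1 - t))
    rw [psiLimit_eq_integral hqM₁ hqM₂ hη ht,
      integral_add weighted_integrable symbolW.integrable_re,
      integral_add (symbol₁.integrable_re.const_mul t) (symbol₂.integrable_re.const_mul (1 - t)),
      integral_const_mul, integral_const_mul]
    ring
  rw [integral_eq]
  refine limit.congr fun i => ?_
  rw [psiN]
  ring

end Overlap

/-- **Uniform convergence of the mean overlap exponents.**  For bounded measurable
`q₁, q₂` with `η ≤ q_k ≤ M` a.e. (`0 < η ≤ M`), the functions `(1/n^ν) ψ_n` converge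
uniformly on `[0,1]` to `ψ`. -/
theorem psiN_tendstoUniformly {ν : ℕ} (hν : 1 ≤ ν)
    (q₁ q₂ : (Fin ν → ℝ) → ℝ) (η M : ℝ) (hη : 0 < η) (hηM : η ≤ M)
    (hmeas₁ : Measurable q₁) (hmeas₂ : Measurable q₂)
    (hq₁ : ∀ᵐ x ∂(volume.restrict (cube ν)), q₁ x ∈ Set.Icc η M)
    (hq₂ : ∀ᵐ x ∂(volume.restrict (cube ν)), q₂ x ∈ Set.Icc η M) :
    TendstoUniformlyOn (fun (n : ℕ) (t : ℝ) => ((n : ℝ) ^ ν)⁻¹ * psiN q₁ q₂ n t)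
      (psiLimit q₁ q₂) atTop (Set.Icc 0 1) := by
  rw [← ae_cubeMeasure] at hq₁ hq₂
  refine tendstoUniformlyOn_of_isCompact_of_tendsto_prod isCompact_Icc fun t ht => ?_
  exact tendsto_psiN tendsto_fst hmeas₁.aemeasurable hq₁ hmeas₂.aemeasurable hq₂ hη
    (tendsto_snd.mono_right nhdsWithin_le_nhds) (tendsto_snd.eventually self_mem_nhdsWithin) ht

end
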